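/- arXiv:2605.03681 — 2 statements merged into one kernel-verified Lean document; each statement's English description precedes it below -/
import Mathlib

section
/- Let H be a real Hilbert space and let μ be a compactly supported finite signed Borel measure on H such that ∬ e^{−‖x−y‖²} dμ(x) dμ(y) = 0. Then μ = 0. -/
open MeasureTheory Real

/-- Integral of a function against a finite signed Borel measure,
via the Jordan decomposition. -/
noncomputable def sInt {X : Type*} [MeasurableSpace X]
    (μ : SignedMeasure X) (f : X → ℝ) : ℝ :=
  (∫ x, f x ∂μ.toJordanDecomposition.posPart) -
  (∫ x, f x ∂μ.toJordanDecomposition.negPart)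

/-- The Gaussian form ∬ e^{-‖x-y‖²} dμ(x) dν(y). -/
noncomputable def gaussForm {H : Type*} [NormedAddCommGroup H] [MeasurableSpace H]
    (μ ν : SignedMeasure H) : ℝ :=
  sInt μ (fun x => sInt ν (fun y => Real.exp (-‖x - y‖ ^ 2)))

/-!
The Gaussian kernel factors as `e^{-‖x‖²} e^{-‖y‖²} e^{2⟪x, y⟫}`, which is positive semidefinite by
the Schur product theorem, so it is `⟪φ x, φ y⟫` for a feature map `φ` into some Hilbert space, and
`∬ e^{-‖x - y‖²} dμ dμ = ‖∫ φ dμ‖²`. If this vanishes, the positive and negative parts of `μ` have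
the same Gaussian potentials; by the factorization, after multiplication by `e^{-‖x‖²}` they have
the same exponential moments `∫ e^{⟪x, t⟫}`, hence by analytic continuation the same characteristic
function, and so they are equal. Characteristic functions determine measures on separable Hilbert
spaces; the general case reduces to this one because the Gaussian kernel depends only on distances
and `μ` lives on a separable set.
-/

open ProbabilityTheory TopologicalSpace
open scoped ComplexOrder ENNReal

section PosSemidef

variable {X 𝕜 : Type*} [RCLike 𝕜]

lemma posSemidef_gram {E : Type*} [SeminormedAddCommGroup E] [InnerProductSpace 𝕜 E]
    (φ : X → E) : (Matrix.gram 𝕜 φ).PosSemidef := by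
  refine ⟨Matrix.isHermitian_gram 𝕜 φ, fun c => ?_⟩
  have hsum : (c.sum fun x a => c.sum fun y b => star a * Matrix.gram 𝕜 φ x y * b)
      = inner 𝕜 (c.sum fun x a => a • φ x) (c.sum fun y b => b • φ y) := by
    simp_rw [Finsupp.sum, sum_inner, inner_sum, inner_smul_left, inner_smul_right,
      Matrix.gram_apply, RCLike.star_def, mul_assoc, mul_comm]
  rw [hsum, inner_self_eq_norm_sq_to_K]
  exact_mod_cast sq_nonneg ‖c.sum fun x a => a • φ x‖

lemma posSemidef_map_pow {M : Matrix X X 𝕜} (hM : M.PosSemidef) (n : ℕ) :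
    (M.map (· ^ n)).PosSemidef := by
  induction n with
  | zero =>
    convert posSemidef_gram (𝕜 := 𝕜) fun _ : X => (1 : 𝕜) using 1
    ext x y
    simp
  | succ n ih =>
    convert ih.hadamard hM using 1
    ext x y
    exact pow_succ _ _

lemma posSemidef_of_hasSum {ι : Type*} {M : ι → Matrix X X 𝕜} {A : Matrix X X 𝕜}
    (hM : ∀ i, (M i).PosSemidef) (hA : ∀ x y, HasSum (fun i => M i x y) (A x y)) :
    A.PosSemidef := by
  refine ⟨Matrix.ext fun x y => ?_, fun c => ?_⟩
  · refine HasSum.unique ?_ (hA x y)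
    rw [Matrix.conjTranspose_apply]
    simpa only [(hM _).isHermitian.apply] using (hA y x).star
  · have hsum : HasSum (fun i => c.sum fun x a => c.sum fun y b => star a * M i x y * b)
        (c.sum fun x a => c.sum fun y b => star a * A x y * b) :=
      hasSum_sum fun x _ => hasSum_sum fun y _ => ((hA x y).mul_left _).mul_right _
    exact hsum.nonneg fun i => (hM i).2 c

lemma posSemidef_map_exp {M : Matrix X X ℝ} (hM : M.PosSemidef) : (M.map exp).PosSemidef := by
  refine posSemidef_of_hasSum (M := fun n : ℕ => (n.factorial : ℝ)⁻¹ • M.map (· ^ n))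
    (fun n => (posSemidef_map_pow hM n).smul (by positivity)) fun x y => ?_
  rw [Matrix.map_apply, exp_eq_exp_ℝ]
  simpa only [Matrix.smul_apply, Matrix.map_apply, smul_eq_mul, div_eq_inv_mul] using
    NormedSpace.expSeries_div_hasSum_exp (M x y)

end PosSemidef

section FeatureMap

universe u

lemma exists_inner_eq_of_posSemidef {X : Type u} {k : X → X → ℝ} (hk : (Matrix.of k).PosSemidef) :
    ∃ (E : Type u) (_ : NormedAddCommGroup E) (_ : InnerProductSpace ℝ E) (_ : CompleteSpace E)
      (φ : X → E), ∀ x y, inner ℝ (φ x) (φ y) = k x y := by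
  have hsymm : ∀ x y, k y x = k x y := fun x y => by simpa using hk.isHermitian.apply x y
  -- `RKHS` takes operator-valued kernels: `k x y` acts on `ℝ` by multiplication.
  let G : Matrix X X (ℝ →L[ℝ] ℝ) := .of fun x y => k x y • ContinuousLinearMap.id ℝ ℝ
  have hG : G.PosSemidef := by
    refine ((RKHS.posSemidef_tfae (K := G)).out 0 2 rfl rfl).mpr ⟨?_, fun c => ?_⟩
    · ext x y
      simp [G, hsymm x y, ContinuousLinearMap.star_eq_adjoint, ContinuousLinearMap.adjoint_id]
    · simpa [G, hsymm, mul_comm, mul_left_comm] using hk.2 c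
  have : Fact G.PosSemidef := ⟨hG⟩
  refine ⟨RKHS.OfKernel G, inferInstance, inferInstance, inferInstance,
    fun x => RKHS.kerFun (RKHS.OfKernel G) x 1, fun x y => ?_⟩
  rw [← RKHS.kernel_inner, RKHS.OfKernel.kernel_ofKernel]
  simp [G, hsymm]

lemma continuous_of_continuous_inner {X E : Type*} [TopologicalSpace X]
    [SeminormedAddCommGroup E] [InnerProductSpace ℝ E] {φ : X → E}
    (h : Continuous fun p : X × X => inner ℝ (φ p.1) (φ p.2)) : Continuous φ := by
  refine continuous_iff_continuousAt.2 fun x => tendsto_iff_dist_tendsto_zero.2 ?_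
  have hdist : ∀ y, dist (φ y) (φ x)
      = √(inner ℝ (φ y) (φ y) - 2 * inner ℝ (φ y) (φ x) + inner ℝ (φ x) (φ x)) := fun y => by
    rw [real_inner_self_eq_norm_sq, real_inner_self_eq_norm_sq, ← norm_sub_sq_real,
      sqrt_sq (norm_nonneg _), dist_eq_norm]
  have hcont : Continuous fun y =>
      √(inner ℝ (φ y) (φ y) - 2 * inner ℝ (φ y) (φ x) + inner ℝ (φ x) (φ x)) := by
    have hdiag : Continuous fun y => inner ℝ (φ y) (φ y) :=
      h.comp (continuous_id.prodMk continuous_id)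
    have hleft : Continuous fun y => inner ℝ (φ y) (φ x) := h.comp (.prodMk_left x)
    fun_prop
  simp_rw [hdist]
  simpa [two_mul] using hcont.tendsto x

end FeatureMap

section KernelDiscrepancy

/-- The double integral of a kernel `k` against `(P - Q) ⊗ (P - Q)`: the square of the *maximum
mean discrepancy* between the measures `P` and `Q`. It is written with iterated integrals against
`P` and `Q` separately, so that no signed measure occurs. -/
noncomputable def kernelDiscrepancy {X : Type*} [MeasurableSpace X] (k : X → X → ℝ)
    (P Q : Measure X) : ℝ :=
  (∫ x, ((∫ y, k x y ∂P) - ∫ y, k x y ∂Q) ∂P) - ∫ x, ((∫ y, k x y ∂P) - ∫ y, k x y ∂Q) ∂Q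

variable {X Y : Type*} [MeasurableSpace X] {P Q : Measure X}

lemma kernelDiscrepancy_inner {E : Type*} [NormedAddCommGroup E] [InnerProductSpace ℝ E]
    [CompleteSpace E] {φ : X → E} (hP : Integrable φ P) (hQ : Integrable φ Q) :
    kernelDiscrepancy (fun x y => inner ℝ (φ x) (φ y)) P Q
      = ‖(∫ x, φ x ∂P) - ∫ x, φ x ∂Q‖ ^ 2 := by
  set m : E := (∫ x, φ x ∂P) - ∫ x, φ x ∂Q
  have hpot : ∀ x, (∫ y, inner ℝ (φ x) (φ y) ∂P) - ∫ y, inner ℝ (φ x) (φ y) ∂Q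
      = inner ℝ m (φ x) := fun x => by
    rw [integral_inner hP, integral_inner hQ, ← inner_sub_right, real_inner_comm]
  simp_rw [kernelDiscrepancy, hpot]
  rw [integral_inner hP, integral_inner hQ, ← inner_sub_right, real_inner_self_eq_norm_sq]

theorem integral_kernel_eq_of_kernelDiscrepancy_eq_zero [TopologicalSpace X]
    [SecondCountableTopology X] [OpensMeasurableSpace X] [IsFiniteMeasure P] [IsFiniteMeasure Q]
    {k : X → X → ℝ} {C : ℝ} (hk : (Matrix.of k).PosSemidef)
    (hcont : Continuous fun p : X × X => k p.1 p.2) (hC : ∀ x, k x x ≤ C)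
    (h : kernelDiscrepancy k P Q = 0) (x : X) :
    ∫ y, k x y ∂P = ∫ y, k x y ∂Q := by
  obtain ⟨E, _, _, _, φ, hφ⟩ := exists_inner_eq_of_posSemidef hk
  obtain rfl : (fun x y => inner ℝ (φ x) (φ y)) = k := funext₂ hφ
  have hφ_cont : Continuous φ := continuous_of_continuous_inner hcont
  have hφ_int (ν : Measure X) [IsFiniteMeasure ν] : Integrable φ ν := by
    refine .of_bound hφ_cont.aestronglyMeasurable √C (.of_forall fun x => ?_)
    exact le_sqrt_of_sq_le (real_inner_self_eq_norm_sq (φ x) ▸ hC x)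
  rw [kernelDiscrepancy_inner (hφ_int P) (hφ_int Q), sq_eq_zero_iff, norm_eq_zero,
    sub_eq_zero] at h
  rw [integral_inner (hφ_int P), integral_inner (hφ_int Q), h]

lemma kernelDiscrepancy_map [TopologicalSpace Y] [FirstCountableTopology Y] [MeasurableSpace Y]
    [OpensMeasurableSpace Y] [IsFiniteMeasure P] [IsFiniteMeasure Q] {k : Y → Y → ℝ} {C : ℝ}
    (hcont : Continuous fun p : Y × Y => k p.1 p.2) (hC : ∀ x y, ‖k x y‖ ≤ C)
    {f : X → Y} (hf : Measurable f) :
    kernelDiscrepancy k (P.map f) (Q.map f) = kernelDiscrepancy (fun x y => k (f x) (f y)) P Q := by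
  have hk_right (x : Y) : Continuous (k x) := hcont.comp (.prodMk_right x)
  have hpot_cont (ν : Measure Y) [IsFiniteMeasure ν] : Continuous fun x => ∫ y, k x y ∂ν :=
    continuous_of_dominated (fun x => (hk_right x).aestronglyMeasurable)
      (fun x => .of_forall (hC x)) (integrable_const C)
      (.of_forall fun y => hcont.comp (.prodMk_left y))
  have hpot_map (ν : Measure X) (x : Y) : (∫ y, k x y ∂(ν.map f)) = ∫ y, k x (f y) ∂ν :=
    integral_map hf.aemeasurable (hk_right x).aestronglyMeasurable
  have hdiff : Continuous fun x => (∫ y, k x y ∂(P.map f)) - ∫ y, k x y ∂(Q.map f) :=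
    (hpot_cont _).sub (hpot_cont _)
  rw [kernelDiscrepancy, integral_map hf.aemeasurable hdiff.aestronglyMeasurable,
    integral_map hf.aemeasurable hdiff.aestronglyMeasurable]
  simp_rw [hpot_map, kernelDiscrepancy]

end KernelDiscrepancy

section GaussianKernel

/-- The Gaussian kernel `exp (-d(x, y)²)`. It is defined on any metric space, so that it makes
sense on subsets of `H` and is visibly preserved by isometries. -/
noncomputable def gaussianKernel {X : Type*} [PseudoMetricSpace X] (x y : X) : ℝ :=
  exp (-dist x y ^ 2)

section Metric

variable {X : Type*} [PseudoMetricSpace X]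

lemma continuous_gaussianKernel : Continuous fun p : X × X => gaussianKernel p.1 p.2 := by
  unfold gaussianKernel
  fun_prop

lemma norm_gaussianKernel_le_one (x y : X) : ‖gaussianKernel x y‖ ≤ 1 := by
  rw [gaussianKernel, norm_eq_abs, abs_exp, exp_le_one_iff, neg_nonpos]
  exact sq_nonneg _

lemma kernelDiscrepancy_gaussianKernel_map [MeasurableSpace X] [BorelSpace X] {Y : Type*}
    [PseudoMetricSpace Y] [MeasurableSpace Y] [BorelSpace Y] {P Q : Measure X} [IsFiniteMeasure P]
    [IsFiniteMeasure Q] {f : X → Y} (hf : Isometry f) :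
    kernelDiscrepancy gaussianKernel (P.map f) (Q.map f)
      = kernelDiscrepancy gaussianKernel P Q := by
  rw [kernelDiscrepancy_map continuous_gaussianKernel norm_gaussianKernel_le_one
    hf.continuous.measurable]
  simp only [gaussianKernel, hf.dist_eq, kernelDiscrepancy]

end Metric

variable {E : Type*} [NormedAddCommGroup E] [InnerProductSpace ℝ E]

lemma gaussianKernel_eq_mul_exp_inner (x y : E) :
    gaussianKernel x y = exp (-‖x‖ ^ 2) * exp (-‖y‖ ^ 2) * exp (2 * inner ℝ x y) := by
  rw [gaussianKernel, dist_eq_norm, ← exp_add, ← exp_add, norm_sub_sq_real]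
  ring_nf

lemma posSemidef_gaussianKernel : (Matrix.of (gaussianKernel (X := E))).PosSemidef := by
  have hweight := posSemidef_gram (𝕜 := ℝ) fun x : E => exp (-‖x‖ ^ 2)
  have hexp := posSemidef_map_exp <|
    (posSemidef_gram (𝕜 := ℝ) (id : E → E)).smul (zero_le_two : (0 : ℝ) ≤ 2)
  have hfactor : Matrix.of (gaussianKernel (X := E))
      = (Matrix.gram ℝ fun x : E => exp (-‖x‖ ^ 2)).hadamard
          (((2 : ℝ) • Matrix.gram ℝ (id : E → E)).map exp) := by
    ext x y
    simp [gaussianKernel_eq_mul_exp_inner, mul_comm]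
  rw [hfactor]
  exact hweight.hadamard hexp

end GaussianKernel

section GaussianWeight

variable {E : Type*} [NormedAddCommGroup E]

/-- The density `exp (-‖x‖²)` by which a measure is multiplied to turn its Gaussian potentials
into exponential moments. -/
noncomputable def gaussianWeight (x : E) : ℝ≥0∞ := .ofReal (exp (-‖x‖ ^ 2))

lemma gaussianWeight_ne_zero (x : E) : gaussianWeight x ≠ 0 :=
  (ENNReal.ofReal_pos.2 (exp_pos _)).ne'

lemma gaussianWeight_ne_top (x : E) : gaussianWeight x ≠ ∞ := ENNReal.ofReal_ne_top

lemma gaussianWeight_le_one (x : E) : gaussianWeight x ≤ 1 := by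
  simp [gaussianWeight]

lemma toReal_gaussianWeight_smul_exp_inner [InnerProductSpace ℝ E] (x t : E) :
    (gaussianWeight x).toReal • exp (inner ℝ x t)
      = exp (‖t‖ ^ 2 / 4) * gaussianKernel ((2⁻¹ : ℝ) • t) x := by
  rw [gaussianWeight, ENNReal.toReal_ofReal (exp_pos _).le, smul_eq_mul,
    gaussianKernel_eq_mul_exp_inner, norm_smul, real_inner_smul_left, real_inner_comm,
    ← exp_add, ← exp_add, ← exp_add, ← exp_add]
  congr 1
  norm_num
  ring

variable [MeasurableSpace E] [OpensMeasurableSpace E]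

lemma measurable_gaussianWeight : Measurable (gaussianWeight : E → ℝ≥0∞) := by
  unfold gaussianWeight
  fun_prop

instance isFiniteMeasure_withDensity_gaussianWeight {P : Measure E} [IsFiniteMeasure P] :
    IsFiniteMeasure (P.withDensity gaussianWeight) :=
  isFiniteMeasure_withDensity ((lintegral_mono gaussianWeight_le_one).trans_lt (by simp)).ne

variable [InnerProductSpace ℝ E] {P : Measure E}

lemma integral_exp_inner_withDensity_gaussianWeight (t : E) :
    ∫ x, exp (inner ℝ x t) ∂(P.withDensity gaussianWeight)
      = exp (‖t‖ ^ 2 / 4) * ∫ x, gaussianKernel ((2⁻¹ : ℝ) • t) x ∂P := by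
  rw [integral_withDensity_eq_integral_toReal_smul measurable_gaussianWeight
    (.of_forall fun x => (gaussianWeight_ne_top x).lt_top), ← integral_const_mul]
  simp_rw [toReal_gaussianWeight_smul_exp_inner]

lemma integrable_exp_inner_withDensity_gaussianWeight [IsFiniteMeasure P] (t : E) :
    Integrable (fun x => exp (inner ℝ x t)) (P.withDensity gaussianWeight) := by
  rw [integrable_withDensity_iff_integrable_smul' measurable_gaussianWeight
    (.of_forall fun x => (gaussianWeight_ne_top x).lt_top)]
  simp_rw [toReal_gaussianWeight_smul_exp_inner]
  have hcont : Continuous (gaussianKernel ((2⁻¹ : ℝ) • t)) :=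
    continuous_gaussianKernel.comp (.prodMk_right _)
  exact (Integrable.of_bound hcont.aestronglyMeasurable 1
    (.of_forall (norm_gaussianKernel_le_one _))).const_mul _

end GaussianWeight

section Ext

variable {E : Type*} [NormedAddCommGroup E] [InnerProductSpace ℝ E] [CompleteSpace E]
  [SecondCountableTopology E] [MeasurableSpace E] [BorelSpace E]
  {P Q : Measure E} [IsFiniteMeasure P] [IsFiniteMeasure Q]

lemma measure_ext_of_integral_exp_inner (hP : ∀ t, Integrable (fun x => exp (inner ℝ x t)) P)
    (h : ∀ t, ∫ x, exp (inner ℝ x t) ∂P = ∫ x, exp (inner ℝ x t) ∂Q) : P = Q := by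
  refine Measure.ext_of_charFun (funext fun t => ?_)
  have hmgf : mgf (inner ℝ · t) P = mgf (inner ℝ · t) Q := funext fun s => by
    simpa only [mgf, inner_smul_right] using h (s • t)
  have hzero : P = 0 ↔ Q = 0 := by
    have hmass : P.real Set.univ = Q.real Set.univ := by simpa using h 0
    rw [← Measure.measure_univ_eq_zero, ← Measure.measure_univ_eq_zero,
      ← measureReal_eq_zero_iff, ← measureReal_eq_zero_iff, hmass]
  have hset : integrableExpSet (inner ℝ · t) P = Set.univ :=
    Set.eq_univ_of_forall fun s => by
      simpa only [integrableExpSet, Set.mem_ofPred_eq, inner_smul_right] using hP (s • t)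
  -- Both sides of `hmgf` extend analytically to `ℂ`; at `i` they are the characteristic functions.
  have hI := eqOn_complexMGF_of_mgf' hmgf hzero (x := Complex.I) (by simp [hset])
  simpa only [complexMGF, charFun_apply, mul_comm Complex.I] using hI

theorem measure_ext_of_integral_gaussianKernel
    (h : ∀ x, ∫ y, gaussianKernel x y ∂P = ∫ y, gaussianKernel x y ∂Q) : P = Q := by
  have hweighted : P.withDensity gaussianWeight = Q.withDensity gaussianWeight :=
    measure_ext_of_integral_exp_inner integrable_exp_inner_withDensity_gaussianWeight fun t => by
      simp_rw [integral_exp_inner_withDensity_gaussianWeight, h]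
  have hunweight (ν : Measure E) :
      (ν.withDensity gaussianWeight).withDensity (fun x => (gaussianWeight x)⁻¹) = ν :=
    withDensity_inv_same measurable_gaussianWeight (.of_forall gaussianWeight_ne_zero)
      (.of_forall gaussianWeight_ne_top)
  rw [← hunweight P, hweighted, hunweight Q]

theorem measure_ext_of_kernelDiscrepancy_gaussianKernel
    (h : kernelDiscrepancy gaussianKernel P Q = 0) : P = Q :=
  measure_ext_of_integral_gaussianKernel <|
    integral_kernel_eq_of_kernelDiscrepancy_eq_zero posSemidef_gaussianKernel
      continuous_gaussianKernel (fun x => (le_abs_self _).trans (norm_gaussianKernel_le_one x x)) h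

end Ext

section Isometry

lemma measure_ext_of_map_eq_of_isInducing {X Y : Type*} [TopologicalSpace X] [TopologicalSpace Y]
    [MeasurableSpace X] [BorelSpace X] [MeasurableSpace Y] [BorelSpace Y] {P Q : Measure X}
    {f : X → Y} (hf : Topology.IsInducing f) (h : P.map f = Q.map f) : P = Q := by
  have hf_meas : Measurable f := hf.continuous.measurable
  ext s hs
  obtain ⟨t, ht, rfl⟩ : ∃ t, MeasurableSet t ∧ f ⁻¹' t = s := by
    borelize X Y
    rwa [hf.eq_induced, borel_comap] at hs
  rw [← Measure.map_apply hf_meas ht, h, Measure.map_apply hf_meas ht]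

theorem measure_ext_of_kernelDiscrepancy_gaussianKernel_of_isometry {X E : Type*}
    [PseudoMetricSpace X] [SecondCountableTopology X] [MeasurableSpace X] [BorelSpace X]
    [NormedAddCommGroup E] [InnerProductSpace ℝ E] [CompleteSpace E] {P Q : Measure X}
    [IsFiniteMeasure P] [IsFiniteMeasure Q] {f : X → E} (hf : Isometry f)
    (h : kernelDiscrepancy gaussianKernel P Q = 0) : P = Q := by
  let T : Submodule ℝ E := (Submodule.span ℝ (Set.range f)).topologicalClosure
  have hT : IsSeparable (T : Set E) := (isSeparable_range hf.continuous).span.closure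
  have : SecondCountableTopology T := hT.secondCountableTopology
  let _ : MeasurableSpace T := borel T
  have : BorelSpace T := ⟨rfl⟩
  let g : X → T := fun x =>
    ⟨f x, Submodule.le_topologicalClosure _ (Submodule.subset_span ⟨x, rfl⟩)⟩
  have hg : Isometry g := hf
  have hmap : P.map g = Q.map g :=
    measure_ext_of_kernelDiscrepancy_gaussianKernel <| by
      rwa [kernelDiscrepancy_gaussianKernel_map hg]
  exact measure_ext_of_map_eq_of_isInducing hg.isUniformInducing.isInducing hmap

end Isometry

theorem measure_ext_of_kernelDiscrepancy_gaussianKernel_of_isSeparable {H : Type*}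
    [NormedAddCommGroup H] [InnerProductSpace ℝ H] [MeasurableSpace H] [BorelSpace H]
    {P Q : Measure H} [IsFiniteMeasure P] [IsFiniteMeasure Q] {S : Set H} (hS : IsSeparable S)
    (hS_meas : MeasurableSet S) (hP : P Sᶜ = 0) (hQ : Q Sᶜ = 0)
    (h : kernelDiscrepancy gaussianKernel P Q = 0) : P = Q := by
  have hmap_comap (ν : Measure H) (hν : ν Sᶜ = 0) :
      (ν.comap ((↑) : S → H)).map (↑) = ν := by
    rw [map_comap_subtype_coe hS_meas, Measure.restrict_eq_self_of_ae_mem (mem_ae_iff.2 hν)]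
  have : SecondCountableTopology S := hS.secondCountableTopology
  have hcomap : P.comap ((↑) : S → H) = Q.comap (↑) := by
    refine measure_ext_of_kernelDiscrepancy_gaussianKernel_of_isometry
      (UniformSpace.Completion.coe_isometry.comp isometry_subtype_coe) ?_
    rw [← kernelDiscrepancy_gaussianKernel_map isometry_subtype_coe, hmap_comap P hP,
      hmap_comap Q hQ, h]
  rw [← hmap_comap P hP, hcomap, hmap_comap Q hQ]

section SignedMeasure

variable {X : Type*} [MeasurableSpace X] {μ : SignedMeasure X}

lemma posPart_negPart_toJordanDecomposition_apply_eq_zero {A : Set X} (hA : MeasurableSet A)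
    (h : ∀ B, MeasurableSet B → B ⊆ A → μ B = 0) :
    μ.toJordanDecomposition.posPart A = 0 ∧ μ.toJordanDecomposition.negPart A = 0 := by
  obtain ⟨i, hi, hpos, hneg, hP, hN⟩ := μ.toJordanDecomposition_spec
  rw [hP, hN, SignedMeasure.toMeasureOfZeroLE_apply _ _ _ hA,
    SignedMeasure.toMeasureOfLEZero_apply _ _ _ hA]
  simp [h _ (hi.inter hA) Set.inter_subset_right, h _ (hi.compl.inter hA) Set.inter_subset_right]

lemma signedMeasure_eq_zero_of_posPart_eq_negPart
    (h : μ.toJordanDecomposition.posPart = μ.toJordanDecomposition.negPart) : μ = 0 := by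
  rw [← μ.toSignedMeasure_toJordanDecomposition, JordanDecomposition.toSignedMeasure]
  simp_rw [h, sub_self]

end SignedMeasure

lemma gaussForm_self {H : Type*} [NormedAddCommGroup H] [MeasurableSpace H] (μ : SignedMeasure H) :
    gaussForm μ μ = kernelDiscrepancy gaussianKernel μ.toJordanDecomposition.posPart
      μ.toJordanDecomposition.negPart := by
  simp_rw [gaussForm, sInt, kernelDiscrepancy, gaussianKernel, dist_eq_norm]

theorem stmt2_general {H : Type*} [NormedAddCommGroup H] [InnerProductSpace ℝ H]
    [MeasurableSpace H] [BorelSpace H]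
    (μ : SignedMeasure H) (K : Set H) (hK : IsSeparable K)
    (hsupp : ∀ A : Set H, MeasurableSet A → A ⊆ Kᶜ → μ A = 0)
    (hzero : gaussForm μ μ = 0) :
    μ = 0 := by
  have hmeas : MeasurableSet (closure K) := isClosed_closure.measurableSet
  obtain ⟨hpos, hneg⟩ := posPart_negPart_toJordanDecomposition_apply_eq_zero hmeas.compl
    fun B hB hBK => hsupp B hB (hBK.trans (Set.compl_subset_compl.2 subset_closure))
  refine signedMeasure_eq_zero_of_posPart_eq_negPart ?_
  exact measure_ext_of_kernelDiscrepancy_gaussianKernel_of_isSeparable hK.closure hmeas hpos hneg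
    (gaussForm_self μ ▸ hzero)

theorem stmt2 {H : Type*} [NormedAddCommGroup H] [InnerProductSpace ℝ H] [CompleteSpace H]
    [MeasurableSpace H] [BorelSpace H]
    (μ : SignedMeasure H) (K : Set H) (hK : IsCompact K)
    (hsupp : ∀ A : Set H, MeasurableSet A → A ⊆ Kᶜ → μ A = 0)
    (hzero : gaussForm μ μ = 0) :
    μ = 0 :=
  stmt2_general μ K hK.isSeparable hsupp hzero
end

section
/- Let (Z,d) be a compact metric space and X, Y ⊆ Z closed subsets with X ∪ Y = Z and X ∩ Y = {a} for some point a, such that d(x,y) = d(x,a) + d(a,y) for every x ∈ X and y ∈ Y. Suppose w₁ is a finite signed Borel measure on Z supported in X with ∫ e^{−d(x,y)} dw₁(y) = 1 for every x ∈ X, and w₂ is a finite signed Borel measure on Z supported in Y with ∫ e^{−d(x,y)} dw₂(y) = 1 for every x ∈ Y. Then the measure w = w₁ + w₂ − δ_a satisfies ∫ e^{−d(x,y)} dw(y) = 1 for every x ∈ Z; in particular w(Z) = w₁(X) + w₂(Y) − 1. -/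
open MeasureTheory Real

/-!
If every distance from `x` to the support of a signed measure `w` is measured through `a`, then
`exp (-d(x, y)) = exp (-d(x, a)) * exp (-d(a, y))` there, so the potential of `w` at `x` is
`exp (-d(x, a))` times its potential at `a`. At a point `x` of `X`, the weight of `X` therefore
contributes `1` to the potential of `w₁ + w₂ - δ_a`, while the weight of `Y` contributes
`exp (-d(x, a))`, which is exactly what `-δ_a` takes away.
-/

section SignedIntegral

variable {Z : Type*} [MeasurableSpace Z] {s : SignedMeasure Z}

instance isFiniteMeasure_variation (s : SignedMeasure Z) : IsFiniteMeasure s.variation :=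
  s.totalVariation_eq_variation ▸ inferInstance

theorem sInt_eq_integral {f : Z → ℝ} (hf : s.Integrable f) : sInt s f = ∫ᵛ x, f x ∂<•s := by
  obtain ⟨hpos, hneg⟩ : Integrable f s.toJordanDecomposition.posPart ∧
      Integrable f s.toJordanDecomposition.negPart := by
    rwa [VectorMeasure.Integrable, ← s.totalVariation_eq_variation, SignedMeasure.totalVariation,
      integrable_add_measure] at hf
  conv_rhs => rw [← s.toSignedMeasure_toJordanDecomposition]
  rw [JordanDecomposition.toSignedMeasure, VectorMeasure.integral_sub_vectorMeasure,
    VectorMeasure.integral_toSignedMeasure, VectorMeasure.integral_toSignedMeasure, sInt]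
  · simpa only [VectorMeasure.Integrable, Measure.variation_toSignedMeasure] using hpos
  · simpa only [VectorMeasure.Integrable, Measure.variation_toSignedMeasure] using hneg

/-- A signed measure is supported in `S` if it vanishes on every measurable set disjoint from `S`.
This lets a measure on a subspace `S` be treated as a measure on the ambient space. -/
def IsSupportedIn (s : SignedMeasure Z) (S : Set Z) : Prop :=
  ∀ A : Set Z, MeasurableSet A → A ⊆ Sᶜ → s A = 0

namespace IsSupportedIn

variable {t : SignedMeasure Z} {S T : Set Z}

theorem mono (hs : IsSupportedIn s S) (hST : S ⊆ T) : IsSupportedIn s T :=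
  fun A hA hAT => hs A hA (hAT.trans (Set.compl_subset_compl.2 hST))

theorem add (hs : IsSupportedIn s S) (ht : IsSupportedIn t S) : IsSupportedIn (s + t) S :=
  fun A hA hAS => by rw [add_apply, hs A hA hAS, ht A hA hAS, add_zero]

theorem sub (hs : IsSupportedIn s S) (ht : IsSupportedIn t S) : IsSupportedIn (s - t) S :=
  fun A hA hAS => by rw [sub_apply, hs A hA hAS, ht A hA hAS, sub_zero]

theorem dirac {a : Z} (ha : a ∈ S) : IsSupportedIn (Measure.dirac a).toSignedMeasure S := by
  intro A hA hAS
  have haA : a ∉ A := fun h => hAS h ha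
  rw [Measure.toSignedMeasure_apply_measurable hA, measureReal_def, Measure.dirac_apply' a hA,
    Set.indicator_of_notMem haA, ENNReal.toReal_zero]

theorem apply_eq_of_subset (hs : IsSupportedIn s S) (hS : MeasurableSet S)
    (hT : MeasurableSet T) (hST : S ⊆ T) : s T = s S := by
  rw [← VectorMeasure.of_add_of_sdiff hS hT hST, hs _ (hT.diff hS) fun _ h => h.2, add_zero]

theorem ae_mem (hs : IsSupportedIn s S) (hS : MeasurableSet S) : ∀ᵐ x ∂s.variation, x ∈ S :=
  (VectorMeasure.variation_apply_eq_zero hS.compl).2 fun A hAS hA => hs A hA hAS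

end IsSupportedIn

end SignedIntegral

section Potential

variable {Z : Type*} [PseudoMetricSpace Z] [MeasurableSpace Z]

/-- The potential of a signed measure `w`: its integral against the similarity kernel
`exp (-d(x, y))`, as a function of `x`. -/
noncomputable def potential (w : SignedMeasure Z) (x : Z) : ℝ :=
  sInt w fun y => exp (-dist x y)

/-- The signed measure `w` is a weight for the subspace `S`. It lives on the ambient space and is
required to be supported in `S`. -/
structure IsWeight (w : SignedMeasure Z) (S : Set Z) : Prop where
  isSupportedIn : IsSupportedIn w S
  potential_eq_one : ∀ x ∈ S, potential w x = 1

variable [OpensMeasurableSpace Z]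

theorem integrable_exp_neg_dist (μ : Measure Z) [IsFiniteMeasure μ] (x : Z) :
    Integrable (fun y => exp (-dist x y)) μ := by
  have hcont : Continuous fun y => exp (-dist x y) := by fun_prop
  refine .of_bound hcont.aestronglyMeasurable 1 (.of_forall fun y => ?_)
  rw [norm_of_nonneg (exp_nonneg _), exp_le_one_iff, neg_nonpos]
  exact dist_nonneg

theorem potential_eq_integral (w : SignedMeasure Z) (x : Z) :
    potential w x = ∫ᵛ y, exp (-dist x y) ∂<•w :=
  sInt_eq_integral (integrable_exp_neg_dist w.variation x)

theorem potential_add (w₁ w₂ : SignedMeasure Z) (x : Z) :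
    potential (w₁ + w₂) x = potential w₁ x + potential w₂ x := by
  simp only [potential_eq_integral]
  exact VectorMeasure.integral_add_vectorMeasure (integrable_exp_neg_dist _ x)
    (integrable_exp_neg_dist _ x)

theorem potential_sub (w₁ w₂ : SignedMeasure Z) (x : Z) :
    potential (w₁ - w₂) x = potential w₁ x - potential w₂ x := by
  simp only [potential_eq_integral]
  exact VectorMeasure.integral_sub_vectorMeasure (integrable_exp_neg_dist _ x)
    (integrable_exp_neg_dist _ x)

theorem potential_dirac (a x : Z) :
    potential (Measure.dirac a).toSignedMeasure x = exp (-dist x a) := by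
  have hcont : Continuous fun y => exp (-dist x y) := by fun_prop
  rw [potential_eq_integral, VectorMeasure.integral_toSignedMeasure,
    integral_dirac' _ _ hcont.stronglyMeasurable]

variable {w w₁ w₂ : SignedMeasure Z} {S X Y : Set Z} {a x : Z}

theorem IsSupportedIn.potential_eq_exp_neg_dist_mul (hw : IsSupportedIn w S)
    (hS : MeasurableSet S) (hx : ∀ y ∈ S, dist x y = dist x a + dist a y) :
    potential w x = exp (-dist x a) * potential w a := by
  have hkernel : ∀ y ∈ S, exp (-dist x y) = exp (-dist x a) • exp (-dist a y) := fun y hy => by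
    rw [hx y hy, neg_add, exp_add, smul_eq_mul]
  rw [potential_eq_integral, potential_eq_integral,
    VectorMeasure.integral_congr_ae ((hw.ae_mem hS).mono hkernel),
    VectorMeasure.integral_fun_smul, smul_eq_mul]

theorem IsWeight.potential_eq_exp_neg_dist (hw : IsWeight w S) (hS : MeasurableSet S)
    (ha : a ∈ S) (hx : ∀ y ∈ S, dist x y = dist x a + dist a y) :
    potential w x = exp (-dist x a) := by
  rw [hw.isSupportedIn.potential_eq_exp_neg_dist_mul hS hx, hw.potential_eq_one a ha, mul_one]

theorem IsWeight.add_sub_dirac (hw₁ : IsWeight w₁ X) (hw₂ : IsWeight w₂ Y)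
    (hX : MeasurableSet X) (hY : MeasurableSet Y) (haX : a ∈ X) (haY : a ∈ Y)
    (hadd : ∀ x ∈ X, ∀ y ∈ Y, dist x y = dist x a + dist a y) :
    IsWeight (w₁ + w₂ - (Measure.dirac a).toSignedMeasure) (X ∪ Y) where
  isSupportedIn :=
    ((hw₁.isSupportedIn.mono Set.subset_union_left).add
      (hw₂.isSupportedIn.mono Set.subset_union_right)).sub (.dirac (.inl haX))
  potential_eq_one x hx := by
    rw [potential_sub, potential_add, potential_dirac]
    rcases hx with hx | hx
    · rw [hw₁.potential_eq_one x hx, hw₂.potential_eq_exp_neg_dist hY haY (hadd x hx),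
        add_sub_cancel_right]
    · have hadd' : ∀ y ∈ X, dist x y = dist x a + dist a y := fun y hy => by
        rw [dist_comm x y, hadd y hy x hx, dist_comm y a, dist_comm a x, add_comm]
      rw [hw₂.potential_eq_one x hx, hw₁.potential_eq_exp_neg_dist hX haX hadd',
        add_sub_cancel_left]

end Potential

theorem add_sub_dirac_apply_union {Z : Type*} [MeasurableSpace Z] {w₁ w₂ : SignedMeasure Z}
    {X Y : Set Z} {a : Z} (hw₁ : IsSupportedIn w₁ X) (hw₂ : IsSupportedIn w₂ Y)
    (hX : MeasurableSet X) (hY : MeasurableSet Y) (ha : a ∈ X ∪ Y) :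
    (w₁ + w₂ - (Measure.dirac a).toSignedMeasure) (X ∪ Y) = w₁ X + w₂ Y - 1 := by
  have hXY := hX.union hY
  rw [sub_apply, add_apply, hw₁.apply_eq_of_subset hX hXY Set.subset_union_left,
    hw₂.apply_eq_of_subset hY hXY Set.subset_union_right,
    Measure.toSignedMeasure_apply_measurable hXY, measureReal_def, Measure.dirac_apply_of_mem ha,
    ENNReal.toReal_one]

theorem stmt10_general {Z : Type*} [PseudoMetricSpace Z] [MeasurableSpace Z]
    [OpensMeasurableSpace Z] {X Y : Set Z} {a : Z} (hX : MeasurableSet X) (hY : MeasurableSet Y)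
    (haX : a ∈ X) (haY : a ∈ Y) (hadd : ∀ x ∈ X, ∀ y ∈ Y, dist x y = dist x a + dist a y)
    {w₁ w₂ : SignedMeasure Z} (hw₁ : IsWeight w₁ X) (hw₂ : IsWeight w₂ Y) :
    IsWeight (w₁ + w₂ - (Measure.dirac a).toSignedMeasure) (X ∪ Y) ∧
      (w₁ + w₂ - (Measure.dirac a).toSignedMeasure) (X ∪ Y) = w₁ X + w₂ Y - 1 :=
  ⟨hw₁.add_sub_dirac hw₂ hX hY haX haY hadd,
    add_sub_dirac_apply_union hw₁.isSupportedIn hw₂.isSupportedIn hX hY (.inl haX)⟩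

theorem stmt10 {Z : Type*} [MetricSpace Z] [CompactSpace Z]
    [MeasurableSpace Z] [BorelSpace Z]
    (X Y : Set Z) (a : Z) (hX : IsClosed X) (hY : IsClosed Y)
    (hunion : X ∪ Y = Set.univ) (hinter : X ∩ Y = {a})
    (hadd : ∀ x ∈ X, ∀ y ∈ Y, dist x y = dist x a + dist a y)
    (w₁ w₂ : SignedMeasure Z)
    (hw₁supp : ∀ A : Set Z, MeasurableSet A → A ⊆ Xᶜ → w₁ A = 0)
    (hw₂supp : ∀ A : Set Z, MeasurableSet A → A ⊆ Yᶜ → w₂ A = 0)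
    (hw₁ : ∀ x ∈ X, sInt w₁ (fun y => Real.exp (-dist x y)) = 1)
    (hw₂ : ∀ x ∈ Y, sInt w₂ (fun y => Real.exp (-dist x y)) = 1) :
    (∀ x : Z, sInt (w₁ + w₂ - (Measure.dirac a).toSignedMeasure)
        (fun y => Real.exp (-dist x y)) = 1) ∧
    (w₁ + w₂ - (Measure.dirac a).toSignedMeasure) Set.univ
      = w₁ X + w₂ Y - 1 := by
  obtain ⟨haX, haY⟩ : a ∈ X ∩ Y := hinter ▸ Set.mem_singleton a
  obtain ⟨hw, hmass⟩ := hunion ▸ stmt10_general hX.measurableSet hY.measurableSet haX haY hadd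
    ⟨hw₁supp, hw₁⟩ ⟨hw₂supp, hw₂⟩
  exact ⟨fun x => hw.potential_eq_one x (Set.mem_univ x), hmass⟩
end
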